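/- For the symmetric group S₄, the Fitting height equals 3, the codegree set cod(S₄) has exactly 4 elements, and hence both bounds ℓ_F(G) ≤ |cod(G)| − 1 and ℓ_F(G) ≤ (|cod(G)| + 2)/2 are attained with equality. -/

import Mathlib

open CategoryTheory

/-- The kernel of (the character of) a finite-dimensional complex representation. -/
noncomputable def charKer {G : Type} [Group G] (V : FDRep ℂ G) : Subgroup G :=
  MonoidHom.ker (Representation.asGroupHom V.ρ)

/-- The codegree of a character: `|G : ker χ| / χ(1)`. -/
noncomputable def codeg {G : Type} [Group G] (V : FDRep ℂ G) : ℕ :=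
  (charKer V).index / Module.finrank ℂ V

/-- The set of codegrees of irreducible characters of `G`. -/
def codSet (G : Type) [Group G] : Set ℕ :=
  {n | ∃ V : FDRep ℂ G, Simple V ∧ codeg V = n}

/-- Inner product of class functions on a finite group. -/
noncomputable def innerChar (G : Type) [Group G] (f g : G → ℂ) : ℂ :=
  (∑ᶠ x : G, f x * starRingEnd ℂ (g x)) / Nat.card G

open scoped Classical in
/-- The induced character `θ^G` of a character `θ` of a subgroup `H ≤ G`. -/
noncomputable def indChar {G : Type} [Group G] (H : Subgroup G) (θ : FDRep ℂ ↥H) : G → ℂ :=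
  fun g => (∑ᶠ x : G, if h : x * g * x⁻¹ ∈ H then θ.character ⟨x * g * x⁻¹, h⟩ else 0) /
    Nat.card ↥H

/-- `M/N` is nilpotent: some term of the lower central series of `M` (relative to `M`)
lands in `N`. -/
def nilpotentFactor {G : Type} [Group G] (N M : Subgroup G) : Prop :=
  ∃ m : ℕ, (fun K => ⁅K, M⁆)^[m] M ≤ N

/-- The Fitting height: the length of the shortest normal series with nilpotent factors. -/
noncomputable def fittingHeight (G : Type) [Group G] : ℕ :=
  sInf {n | ∃ c : Fin (n + 1) → Subgroup G, c 0 = ⊥ ∧ c (Fin.last n) = ⊤ ∧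
    (∀ i, (c i).Normal) ∧ (∀ i : Fin n, c i.castSucc ≤ c i.succ) ∧
    ∀ i : Fin n, nilpotentFactor (c i.castSucc) (c i.succ)}

/-
The derived series `S₄ > A₄ > V₄ > 1` satisfies `[A₄, S₄] = A₄` and `[V₄, A₄] = V₄`, so no nilpotent
factor of a normal series can swallow more than one of its steps: by induction every Fitting series
descends no faster than the derived series.

For the codegrees, a 2-transitive action on `X` gives an irreducible representation on the zero-sum
part of `ℂ[X]` (Burnside's lemma counts two orbits on `X × X`). The actions of `S₄` on four points
and on the three partitions of these points into pairs, together with the linear characters `1` and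
`sign`, yield irreducible representations of degrees `1, 1, 2, 3, 3`. Weighted by these degrees,
their characters sum to the regular character, so by orthogonality there are no others. Their
kernels have index `1, 2, 6, 24, 24`, which leaves the codegrees `1, 2, 3, 8`.
-/

section FittingHeight

variable {G : Type} [Group G]

/-- A Fitting series of length `n`: a normal series from `⊥` up to `⊤` whose factors are nilpotent.
The Fitting height is the least length of such a series. -/
structure IsFittingSeries {n : ℕ} (c : Fin (n + 1) → Subgroup G) : Prop where
  zero_eq_bot : c 0 = ⊥
  last_eq_top : c (Fin.last n) = ⊤
  normal : ∀ i, (c i).Normal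
  le_succ : ∀ i : Fin n, c i.castSucc ≤ c i.succ
  nilpotent_factor : ∀ i : Fin n, nilpotentFactor (c i.castSucc) (c i.succ)

lemma fittingHeight_eq_sInf_length :
    fittingHeight G = sInf {n | ∃ c : Fin (n + 1) → Subgroup G, IsFittingSeries c} := by
  refine congrArg sInf <| Set.ext fun n ↦ exists_congr fun c ↦ ?_
  exact ⟨fun ⟨h0, hn, hnormal, hle, hnil⟩ ↦ ⟨h0, hn, hnormal, hle, hnil⟩,
    fun hc ↦ ⟨hc.1, hc.2, hc.3, hc.4, hc.5⟩⟩

lemma nilpotentFactor_of_commutator_le {N M : Subgroup G} (h : ⁅M, M⁆ ≤ N) :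
    nilpotentFactor N M :=
  ⟨1, h⟩

lemma nilpotentFactor.le_of_le_commutator {N M K L : Subgroup G} (h : nilpotentFactor N M)
    (hKM : K ≤ M) (hLM : L ≤ M) (hK : K ≤ ⁅K, L⁆) : K ≤ N := by
  obtain ⟨m, hm⟩ := h
  refine le_trans ?_ hm
  clear hm
  induction m with
  | zero => exact hKM
  | succ m ih =>
    rw [Function.iterate_succ_apply']
    exact hK.trans (Subgroup.commutator_mono ih hLM)

lemma isFittingSeries_derivedSeries {n : ℕ} (hn : derivedSeries G n = ⊥) :
    IsFittingSeries fun i : Fin (n + 1) ↦ derivedSeries G i.rev where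
  zero_eq_bot := by simpa using hn
  last_eq_top := by simp
  normal _ := derivedSeries_normal G _
  le_succ i := derivedSeries_antitone G (by simp [Fin.rev_castSucc, Fin.rev_succ])
  nilpotent_factor i := nilpotentFactor_of_commutator_le (by simp [Fin.rev_castSucc, Fin.rev_succ])

lemma IsFittingSeries.derivedSeries_le {n : ℕ} {c : Fin (n + 1) → Subgroup G}
    (hc : IsFittingSeries c)
    (h : ∀ i < n, derivedSeries G (i + 1) ≤ ⁅derivedSeries G (i + 1), derivedSeries G i⁆)
    (i : Fin (n + 1)) : derivedSeries G i ≤ c i.rev := by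
  induction i using Fin.induction with
  | zero => simp [hc.last_eq_top]
  | succ i ih =>
    have hfactor := hc.nilpotent_factor i.rev
    rw [← Fin.rev_castSucc, ← Fin.rev_succ] at hfactor
    exact hfactor.le_of_le_commutator ((derivedSeries_antitone G i.val.le_succ).trans ih) ih
      (h i i.isLt)

theorem fittingHeight_eq_of_derivedSeries {n : ℕ} (hbot : derivedSeries G (n + 1) = ⊥)
    (hne : derivedSeries G n ≠ ⊥)
    (h : ∀ i < n, derivedSeries G (i + 1) ≤ ⁅derivedSeries G (i + 1), derivedSeries G i⁆) :
    fittingHeight G = n + 1 := by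
  rw [fittingHeight_eq_sInf_length]
  have hmem := isFittingSeries_derivedSeries hbot
  refine le_antisymm (Nat.sInf_le ⟨_, hmem⟩) (le_csInf ⟨_, _, hmem⟩ ?_)
  rintro m ⟨c, hc⟩
  by_contra! hm
  have hm' : m ≤ n := Nat.lt_succ_iff.1 hm
  have hle := hc.derivedSeries_le (fun i hi ↦ h i (hi.trans_le hm')) (Fin.last m)
  rw [Fin.rev_last, hc.zero_eq_bot, Fin.val_last, le_bot_iff] at hle
  exact hne (le_bot_iff.1 (hle ▸ derivedSeries_antitone G hm'))

end FittingHeight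

section DerivedSeries

open Equiv.Perm
open scoped commutatorElement

lemma alternatingGroup_le_commutator_top (α : Type*) [Fintype α] [DecidableEq α] :
    alternatingGroup α ≤ ⁅alternatingGroup α, (⊤ : Subgroup (Equiv.Perm α))⁆ := by
  rw [← closure_three_cycles_eq_alternating, Subgroup.closure_le]
  intro c (hc : c.IsThreeCycle)
  obtain ⟨k, hk⟩ : ∃ k, k * c * k⁻¹ = c⁻¹ :=
    isConj_iff.1 (isConj_iff_cycleType_eq.2 (cycleType_inv c).symm)
  have hcube : c ^ 3 = 1 := hc.orderOf ▸ pow_orderOf_eq_one c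
  have hcomm : ⁅c⁻¹, k⁆ = c := by
    calc ⁅c⁻¹, k⁆ = c⁻¹ * (k * c * k⁻¹) := by rw [commutatorElement_def]; group
      _ = c := by rw [hk, ← mul_inv_rev, inv_eq_iff_mul_eq_one, ← hcube, pow_succ, pow_two]
  rw [← hcomm]
  exact Subgroup.commutator_mem_commutator (inv_mem (Subgroup.subset_closure hc))
    (Subgroup.mem_top k)

lemma derivedSeries_perm_one (α : Type*) [Fintype α] [DecidableEq α] :
    derivedSeries (Equiv.Perm α) 1 = alternatingGroup α :=
  alternatingGroup.commutator_perm_le.antisymm <|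
    (alternatingGroup_le_commutator_top α).trans (Subgroup.commutator_mono le_top le_rfl)

open alternatingGroup in
lemma mem_derivedSeries_perm_two_iff {α : Type*} [Fintype α] [DecidableEq α] (hα : Nat.card α = 4)
    {g : Equiv.Perm α} : g ∈ derivedSeries (Equiv.Perm α) 2 ↔ sign g = 1 ∧ g ^ 2 = 1 := by
  rw [derivedSeries_succ, derivedSeries_perm_one, ← Subgroup.map_subtype_commutator,
    ← kleinFour_eq_commutator hα]
  constructor
  · rintro ⟨v, hv, rfl⟩
    have hsq : (⟨v, hv⟩ : kleinFour α) ^ 2 = 1 :=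
      exponent_kleinFour_of_card_eq_four hα ▸ Monoid.pow_exponent_eq_one _
    exact ⟨v.2, congrArg (fun w : kleinFour α ↦ (w : Equiv.Perm α)) hsq⟩
  · rintro ⟨hsign, hsq⟩
    refine ⟨⟨g, hsign⟩, ?_, rfl⟩
    rw [coe_kleinFour_of_card_eq_four hα]
    exact (mem_kleinFour_of_order_two_pow hα hsign (n := 1) (orderOf_dvd_of_pow_eq_one hsq)).imp
      (fun h ↦ Subtype.ext (cycleType_eq_zero.1 h)) id

lemma derivedSeries_perm_fin_four_two_le_commutator :
    derivedSeries (Equiv.Perm (Fin 4)) 2 ≤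
      ⁅derivedSeries (Equiv.Perm (Fin 4)) 2, derivedSeries (Equiv.Perm (Fin 4)) 1⁆ := by
  have hcomm : ∀ g : Equiv.Perm (Fin 4), sign g = 1 ∧ g ^ 2 = 1 →
      ∃ h k : Equiv.Perm (Fin 4), (sign h = 1 ∧ h ^ 2 = 1) ∧ sign k = 1 ∧ ⁅h, k⁆ = g := by
    decide +kernel
  intro g hg
  obtain ⟨h, k, hh, hk, rfl⟩ := hcomm g ((mem_derivedSeries_perm_two_iff (Nat.card_fin 4)).1 hg)
  rw [derivedSeries_perm_one]
  exact Subgroup.commutator_mem_commutator ((mem_derivedSeries_perm_two_iff (Nat.card_fin 4)).2 hh)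
    (mem_alternatingGroup.2 hk)

lemma derivedSeries_perm_two_ne_bot {α : Type*} (hα : Nat.card α = 4) :
    derivedSeries (Equiv.Perm α) 2 ≠ ⊥ := by
  classical
  have : Finite α := Nat.finite_of_card_ne_zero (by rw [hα]; norm_num)
  have := Fintype.ofFinite α
  rw [derivedSeries_succ, derivedSeries_perm_one, ← Subgroup.map_subtype_commutator,
    ← alternatingGroup.kleinFour_eq_commutator hα, Ne,
    Subgroup.map_eq_bot_iff_of_injective _ (Subgroup.subtype_injective _), ← Subgroup.card_eq_one,
    alternatingGroup.kleinFour_card_of_card_eq_four hα]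
  norm_num

lemma derivedSeries_perm_three_eq_bot {α : Type*} (hα : Nat.card α = 4) :
    derivedSeries (Equiv.Perm α) 3 = ⊥ := by
  classical
  have : Finite α := Nat.finite_of_card_ne_zero (by rw [hα]; norm_num)
  have := Fintype.ofFinite α
  rw [derivedSeries_succ, Subgroup.commutator_eq_bot_iff_le_centralizer]
  have hinv : ∀ x ∈ derivedSeries (Equiv.Perm α) 2, x⁻¹ = x := fun x hx ↦ by
    rw [inv_eq_iff_mul_eq_one, ← pow_two, ((mem_derivedSeries_perm_two_iff hα).1 hx).2]
  intro g hg h hh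
  rw [← hinv _ (mul_mem hh hg), mul_inv_rev, hinv g hg, hinv h hh]

theorem fittingHeight_perm_fin_four : fittingHeight (Equiv.Perm (Fin 4)) = 3 := by
  refine fittingHeight_eq_of_derivedSeries (derivedSeries_perm_three_eq_bot (Nat.card_fin 4))
    (derivedSeries_perm_two_ne_bot (Nat.card_fin 4)) fun i hi ↦ ?_
  interval_cases i
  · rw [derivedSeries_perm_one, derivedSeries_zero]
    exact alternatingGroup_le_commutator_top _
  · exact derivedSeries_perm_fin_four_two_le_commutator

end DerivedSeries

section Codegree

variable {G : Type} [Group G]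

lemma mem_charKer {V : FDRep ℂ G} {g : G} : g ∈ charKer V ↔ V.ρ g = 1 := by
  rw [charKer, MonoidHom.mem_ker, Units.ext_iff, Representation.asGroupHom_apply, Units.val_one]

lemma character_eq_finrank_of_mem_charKer {V : FDRep ℂ G} {g : G} (hg : g ∈ charKer V) :
    V.character g = Module.finrank ℂ V := by
  rw [← FDRep.char_one, FDRep.character, FDRep.character, mem_charKer.1 hg, map_one V.ρ]

lemma charKer_eq_bot_of_character_ne {V : FDRep ℂ G}
    (h : ∀ g ≠ 1, V.character g ≠ Module.finrank ℂ V) : charKer V = ⊥ :=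
  (Subgroup.eq_bot_iff_forall _).2 fun g hg ↦
    of_not_not fun hg1 ↦ h g hg1 (character_eq_finrank_of_mem_charKer hg)

lemma charKer_eq_of_iso {V W : FDRep ℂ G} (i : V ≅ W) : charKer V = charKer W := by
  ext g
  rw [mem_charKer, mem_charKer, FDRep.Iso.conj_ρ i]
  exact (map_eq_one_iff (FDRep.isoToLinearEquiv i).conjRingEquiv
    (FDRep.isoToLinearEquiv i).conjRingEquiv.injective).symm

lemma codeg_eq_of_iso {V W : FDRep ℂ G} (i : V ≅ W) : codeg V = codeg W := by
  rw [codeg, codeg, charKer_eq_of_iso i, (FDRep.isoToLinearEquiv i).finrank_eq]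

lemma codeg_of_charKer_eq_bot {V : FDRep ℂ G} (hV : charKer V = ⊥) :
    codeg V = Nat.card G / Module.finrank ℂ V := by
  rw [codeg, hV, Subgroup.index_bot]

end Codegree

section Orthogonality

variable {k G : Type*} [Field k] [Group G]

lemma finrank_ne_zero_of_simple (V : FDRep k G) [Simple V] : Module.finrank k V ≠ 0 := by
  intro h
  have : Subsingleton V := Module.finrank_zero_iff.1 h
  refine id_nonzero V (Action.Hom.ext ?_)
  ext v
  exact Subsingleton.elim _ _

variable [IsAlgClosed k] [CharZero k]

lemma sum_character_mul_character_inv_eq_zero [Fintype G] {V W : FDRep k G} [Simple V] [Simple W]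
    (h : ¬ Nonempty (V ≅ W)) : ∑ g, V.character g * W.character g⁻¹ = 0 := by
  have hG : (Nat.card G : k) ≠ 0 := Nat.cast_ne_zero.2 Nat.card_pos.ne'
  have := invertibleOfNonzero hG
  have horth := FDRep.char_orthonormal V W
  rw [if_neg h] at horth
  exact (mul_eq_zero.1 horth).resolve_left (inv_ne_zero hG)

/-- Pairing with the regular character evaluates a character at `1`, so a simple representation
cannot be orthogonal to every constituent of the regular character. -/
theorem exists_iso_of_sum_character_eq_regular [Finite G] [DecidableEq G] {ι : Type*} [Fintype ι]
    {W : ι → FDRep k G} [∀ i, Simple (W i)] {m : ι → k}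
    (hW : ∀ g, ∑ i, m i * (W i).character g = if g = 1 then (Nat.card G : k) else 0)
    (V : FDRep k G) [Simple V] : ∃ i, Nonempty (V ≅ W i) := by
  by_contra! h
  have := Fintype.ofFinite G
  have hpairing : V.character 1 * Nat.card G = 0 :=
    calc V.character 1 * Nat.card G
      _ = ∑ g, V.character g * ∑ i, m i * (W i).character g⁻¹ := by simp [hW]
      _ = ∑ i, m i * ∑ g, V.character g * (W i).character g⁻¹ := by
        simp only [Finset.mul_sum, mul_left_comm]
        exact Finset.sum_comm
      _ = 0 := Finset.sum_eq_zero fun i _ ↦ by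
        rw [sum_character_mul_character_inv_eq_zero (not_nonempty_iff.2 (h i)), mul_zero]
  rw [FDRep.char_one, ← Nat.cast_mul, Nat.cast_eq_zero] at hpairing
  exact mul_ne_zero (finrank_ne_zero_of_simple V) Nat.card_pos.ne' hpairing

theorem codSet_eq_range {G : Type} [Group G] [Finite G] [DecidableEq G] {ι : Type*} [Fintype ι]
    {W : ι → FDRep ℂ G} [∀ i, Simple (W i)] {m : ι → ℂ}
    (hW : ∀ g, ∑ i, m i * (W i).character g = if g = 1 then (Nat.card G : ℂ) else 0) :
    codSet G = Set.range fun i ↦ codeg (W i) := by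
  ext n
  constructor
  · rintro ⟨V, hV, rfl⟩
    obtain ⟨i, ⟨e⟩⟩ := exists_iso_of_sum_character_eq_regular hW V
    exact ⟨i, (codeg_eq_of_iso e).symm⟩
  · rintro ⟨i, rfl⟩
    exact ⟨W i, inferInstance, rfl⟩

end Orthogonality

section DeletedPermutation

open MonoidAlgebra Representation

variable (k G X : Type*) [Field k] [Group G] [MulAction G X]

lemma sumCoords_ofMulAction (g : G) (v : k[X]) :
    (basis X k).sumCoords (ofMulAction k G X g v) = (basis X k).sumCoords v := by
  suffices h : (basis X k).sumCoords ∘ₗ ofMulAction k G X g = (basis X k).sumCoords from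
    LinearMap.congr_fun h v
  refine (basis X k).ext fun x ↦ ?_
  rw [LinearMap.comp_apply, basis_apply, ofMulAction_single]
  simp only [← basis_apply, Module.Basis.sumCoords_self_apply]

/-- The coefficients-sum-zero part of the permutation representation `k[X]`; its character counts
fixed points minus one. -/
noncomputable def deletedPermRep : Subrepresentation (ofMulAction k G X) where
  toSubmodule := LinearMap.ker (basis X k).sumCoords
  apply_mem_toSubmodule g v hv := by
    rwa [LinearMap.mem_ker, sumCoords_ofMulAction]

variable {k G X} [Fintype X] [DecidableEq X]

lemma character_ofMulAction (g : G) :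
    (ofMulAction k G X).character g = Fintype.card (MulAction.fixedBy X g) := by
  have hdiag (x : X) : LinearMap.toMatrix (basis X k) (basis X k) (ofMulAction k G X g) x x =
      if g • x = x then 1 else 0 := by
    rw [LinearMap.toMatrix_apply, basis_apply, ofMulAction_single, ← basis_apply,
      Module.Basis.repr_self_apply]
  rw [Representation.character, LinearMap.trace_eq_matrix_trace k (basis X k), Matrix.trace]
  simp only [Matrix.diag_apply, hdiag, Finset.sum_boole, MulAction.mem_fixedBy,
    Fintype.card_subtype]

/-- The endomorphism `v ↦ g • v - (∑ v) • x` has zero-sum values and agrees with `g` on zero-sum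
vectors, so the two traces coincide. -/
lemma character_deletedPermRep [Nonempty X] (g : G) :
    (deletedPermRep k G X).toRepresentation.character g =
      Fintype.card (MulAction.fixedBy X g) - 1 := by
  obtain ⟨x⟩ := ‹Nonempty X›
  let f := ofMulAction k G X g - (basis X k).sumCoords.smulRight (basis X k x)
  have hmem (v : k[X]) : f v ∈ (deletedPermRep k G X).toSubmodule := by
    rw [deletedPermRep, LinearMap.mem_ker, LinearMap.sub_apply, map_sub, sumCoords_ofMulAction,
      LinearMap.smulRight_apply, map_smul, Module.Basis.sumCoords_self_apply, smul_eq_mul, mul_one,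
      sub_self]
  have hres : (deletedPermRep k G X).toRepresentation g = f.restrict fun v _ ↦ hmem v := by
    refine LinearMap.ext fun v ↦ Subtype.ext ?_
    have hv : (basis X k).sumCoords v = 0 := v.2
    change ofMulAction k G X g v = ofMulAction k G X g v - (basis X k).sumCoords v • basis X k x
    rw [hv, zero_smul, sub_zero]
  rw [Representation.character, hres, LinearMap.trace_restrict_eq_of_forall_mem, map_sub,
    LinearMap.trace_smulRight, Module.Basis.sumCoords_self_apply, ← character_ofMulAction,
    Representation.character]

lemma finrank_deletedPermRep (k G X : Type*) [Field k] [CharZero k] [Group G] [MulAction G X]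
    [Fintype X] [Nonempty X] :
    Module.finrank k (deletedPermRep k G X).toSubmodule = Fintype.card X - 1 := by
  classical
  have h := (deletedPermRep k G X).toRepresentation.char_one.symm.trans (character_deletedPermRep 1)
  rw [eq_sub_iff_add_eq] at h
  have hcard : Fintype.card (MulAction.fixedBy X (1 : G)) = Fintype.card X := by simp
  rw [hcard] at h
  norm_cast at h
  omega

lemma deletedPermRep_eq_one_iff {k G X : Type*} [Field k] [CharZero k] [Group G] [MulAction G X]
    [Finite X] [Nonempty X] {g : G} :
    (deletedPermRep k G X).toRepresentation g = 1 ↔ g ∈ (MulAction.toPermHom G X).ker := by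
  classical
  have := Fintype.ofFinite X
  rw [MonoidHom.mem_ker, Equiv.ext_iff]
  constructor
  · intro h
    have hchar : (deletedPermRep k G X).toRepresentation.character g =
        (deletedPermRep k G X).toRepresentation.character 1 := by
      rw [Representation.character, h, Representation.character,
        map_one (deletedPermRep k G X).toRepresentation]
    rw [character_deletedPermRep, character_deletedPermRep, sub_left_inj, Nat.cast_inj] at hchar
    have huniv : MulAction.fixedBy X g = Set.univ := by
      rw [← set_fintype_card_eq_univ_iff, hchar]
      simp
    exact fun x ↦ huniv.symm.subset (Set.mem_univ x)
  · intro h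
    have hg : ofMulAction k G X g = 1 := (basis X k).ext fun x ↦ by
      rw [basis_apply, ofMulAction_single]
      exact congrArg (single · 1) (h x)
    exact LinearMap.ext fun v ↦ Subtype.ext (LinearMap.congr_fun hg v)

end DeletedPermutation

section TwoTransitive

open MulAction

variable {G X : Type*} [Group G] [MulAction G X]

lemma card_orbitRel_quotient_prod [IsMultiplyPretransitive G X 2] [Nontrivial X] :
    Nat.card (orbitRel.Quotient G (X × X)) = 2 := by
  have : IsPretransitive G X := isPretransitive_of_is_two_pretransitive
  let isDiagonal : orbitRel.Quotient G (X × X) → Prop :=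
    Quotient.lift (fun p ↦ p.1 = p.2) <| by
      rintro _ q ⟨g, rfl⟩
      exact propext (smul_left_cancel_iff g)
  have hbij : Function.Bijective isDiagonal := by
    constructor
    · rintro ⟨x, y⟩ ⟨x', y'⟩ (h : (x = y) = (x' = y'))
      refine Quotient.sound ?_
      by_cases hxy : x = y
      · obtain rfl := hxy
        obtain rfl : x' = y' := h.mp rfl
        obtain ⟨g, hg⟩ := exists_smul_eq G x' x
        exact ⟨g, Prod.ext hg hg⟩
      · obtain ⟨g, hx, hy⟩ := is_two_pretransitive_iff.1 ‹_› (h ▸ hxy) hxy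
        exact ⟨g, Prod.ext hx hy⟩
    · intro p
      obtain ⟨x, y, hxy⟩ := exists_pair_ne X
      by_cases hp : p
      · exact ⟨⟦(x, x)⟧, by simp [isDiagonal, hp]⟩
      · exact ⟨⟦(x, y)⟧, by simp [isDiagonal, hp, hxy]⟩
  rw [Nat.card_eq_of_bijective _ hbij]
  simp

variable [Fintype G] [Fintype X] [DecidableEq X]

lemma sum_card_fixedBy_of_isPretransitive [IsPretransitive G X] [Nonempty X] :
    ∑ g : G, Fintype.card (fixedBy X g) = Nat.card G := by
  classical
  obtain ⟨_⟩ := (pretransitive_iff_unique_quotient_of_nonempty G X).1 ‹_›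
  rw [sum_card_fixedBy_eq_card_orbits_mul_card_group, Fintype.card_unique, one_mul,
    Nat.card_eq_fintype_card]

lemma sum_card_fixedBy_sq_of_two_pretransitive [IsMultiplyPretransitive G X 2] [Nontrivial X] :
    ∑ g : G, Fintype.card (fixedBy X g) ^ 2 = 2 * Nat.card G := by
  classical
  have hprod (g : G) : Fintype.card (fixedBy (X × X) g) = Fintype.card (fixedBy X g) ^ 2 := by
    have hset : fixedBy (X × X) g = fixedBy X g ×ˢ fixedBy X g := by
      ext p
      simp only [mem_fixedBy, Set.mem_prod, Prod.ext_iff, Prod.smul_fst, Prod.smul_snd]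
    rw [Fintype.card_congr ((Equiv.setCongr hset).trans (Equiv.Set.prod _ _)), Fintype.card_prod,
      pow_two]
  simp only [← hprod]
  rw [sum_card_fixedBy_eq_card_orbits_mul_card_group, ← Nat.card_eq_fintype_card,
    ← Nat.card_eq_fintype_card, card_orbitRel_quotient_prod]

end TwoTransitive

section DeletedPermutationFDRep

universe u

open MulAction

variable {k G X : Type u} [Field k] [Group G] [MulAction G X] [Fintype X]

/-- The representation `deletedPermRep` as an object of `FDRep`. -/
noncomputable abbrev deletedPermFDRep (k G X : Type u) [Field k] [Group G] [MulAction G X]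
    [Fintype X] : FDRep k G :=
  .of (deletedPermRep k G X).toRepresentation

lemma character_deletedPermFDRep [DecidableEq X] [Nonempty X] (g : G) :
    (deletedPermFDRep k G X).character g = Fintype.card (fixedBy X g) - 1 :=
  character_deletedPermRep g

theorem simple_deletedPermFDRep [IsAlgClosed k] [CharZero k] [Finite G]
    [IsMultiplyPretransitive G X 2] [Nontrivial X] : Simple (deletedPermFDRep k G X) := by
  classical
  have := Fintype.ofFinite G
  have : IsPretransitive G X := isPretransitive_of_is_two_pretransitive
  have h₁ : ∑ g : G, (Fintype.card (fixedBy X g) : k) = Nat.card G :=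
    mod_cast sum_card_fixedBy_of_isPretransitive
  have h₂ : ∑ g : G, (Fintype.card (fixedBy X g) : k) ^ 2 = 2 * Nat.card G :=
    mod_cast sum_card_fixedBy_sq_of_two_pretransitive
  rw [FDRep.simple_iff_char_is_norm_one]
  calc ∑ g, (deletedPermFDRep k G X).character g * (deletedPermFDRep k G X).character g⁻¹
    _ = ∑ g : G, ((Fintype.card (fixedBy X g) : k) ^ 2 - 2 * Fintype.card (fixedBy X g) + 1) :=
      Finset.sum_congr rfl fun g _ ↦ by
        simp only [character_deletedPermFDRep, fixedBy_inv]
        ring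
    _ = 2 * Nat.card G - 2 * Nat.card G + Nat.card G := by
      rw [Finset.sum_add_distrib, Finset.sum_sub_distrib, ← Finset.mul_sum, h₁, h₂,
        Finset.sum_const, nsmul_one, Finset.card_univ, Nat.card_eq_fintype_card]
    _ = Nat.card G := by ring

lemma charKer_deletedPermFDRep {G X : Type} [Group G] [MulAction G X] [Fintype X] [Nonempty X] :
    charKer (deletedPermFDRep ℂ G X) = (toPermHom G X).ker := by
  classical
  ext g
  rw [mem_charKer]
  exact deletedPermRep_eq_one_iff

theorem codeg_deletedPermFDRep {G X : Type} [Group G] [MulAction G X] [Fintype X] [Nonempty X] :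
    codeg (deletedPermFDRep ℂ G X) = Nat.card (toPermHom G X).range / (Fintype.card X - 1) := by
  rw [codeg, charKer_deletedPermFDRep, Subgroup.index_ker]
  exact congrArg _ (finrank_deletedPermRep ℂ G X)

lemma codeg_deletedPermFDRep_of_surjective {G X : Type} [Group G] [MulAction G X]
    [Fintype X] [Nonempty X] (h : Function.Surjective (toPermHom G X)) :
    codeg (deletedPermFDRep ℂ G X) = (Fintype.card X).factorial / (Fintype.card X - 1) := by
  classical
  rw [codeg_deletedPermFDRep, MonoidHom.range_eq_top.2 h, Subgroup.card_top, Nat.card_perm,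
    Nat.card_eq_fintype_card]

end DeletedPermutationFDRep

section LinearCharacter

universe u

open scoped MonoidalCategory

variable {k G : Type u} [Field k] [Group G]

/-- The one-dimensional representation afforded by a linear character `χ`. -/
noncomputable def linearCharFDRep (χ : G →* k) : FDRep k G :=
  .of ((Algebra.lmul k k : k →* Module.End k k).comp χ)

lemma character_linearCharFDRep (χ : G →* k) (g : G) : (linearCharFDRep χ).character g = χ g :=
  (Algebra.trace_apply k _).symm.trans (Algebra.trace_self_apply (χ g))

lemma finrank_linearCharFDRep (χ : G →* k) : Module.finrank k (linearCharFDRep χ) = 1 :=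
  Module.finrank_self k

lemma map_mul_map_inv_eq_one (χ : G →* k) (g : G) : χ g * χ g⁻¹ = 1 := by
  rw [← map_mul, mul_inv_cancel, map_one]

lemma character_linearCharFDRep_tensor (χ : G →* k) (V : FDRep k G) (g : G) :
    (linearCharFDRep χ ⊗ V).character g = χ g * V.character g := by
  rw [FDRep.char_tensor, Pi.mul_apply, character_linearCharFDRep]

lemma finrank_linearCharFDRep_tensor [CharZero k] (χ : G →* k) (V : FDRep k G) :
    Module.finrank k (linearCharFDRep χ ⊗ V : FDRep k G) = Module.finrank k V := by
  apply Nat.cast_injective (R := k)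
  rw [← FDRep.char_one, ← FDRep.char_one, character_linearCharFDRep_tensor, map_one, one_mul]

lemma codeg_linearCharFDRep {G : Type} [Group G] (χ : G →* ℂ) :
    codeg (linearCharFDRep χ) = χ.ker.index := by
  have hker : charKer (linearCharFDRep χ) = χ.ker := by
    ext g
    rw [mem_charKer, MonoidHom.mem_ker]
    exact map_eq_one_iff (Algebra.lmul ℂ ℂ) Algebra.lmul_injective
  rw [codeg, hker, finrank_linearCharFDRep, Nat.div_one]

variable [IsAlgClosed k] [CharZero k] [Finite G]

lemma simple_linearCharFDRep (χ : G →* k) : Simple (linearCharFDRep χ) := by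
  have := Fintype.ofFinite G
  rw [FDRep.simple_iff_char_is_norm_one]
  simp only [character_linearCharFDRep, map_mul_map_inv_eq_one, Finset.sum_const, nsmul_one,
    Finset.card_univ, Nat.card_eq_fintype_card]

lemma simple_linearCharFDRep_tensor (χ : G →* k) (V : FDRep k G) [Simple V] :
    Simple (linearCharFDRep χ ⊗ V) := by
  have := Fintype.ofFinite G
  rw [FDRep.simple_iff_char_is_norm_one, ← (FDRep.simple_iff_char_is_norm_one V).1 ‹_›]
  refine Finset.sum_congr rfl fun g _ ↦ ?_
  rw [character_linearCharFDRep_tensor, character_linearCharFDRep_tensor, mul_mul_mul_comm,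
    map_mul_map_inv_eq_one, one_mul]

end LinearCharacter

section SymmetricGroup

open Equiv.Perm MulAction
open scoped MonoidalCategory

lemma isMultiplyPretransitive_of_toPermHom_surjective {G X : Type*} [Group G] [MulAction G X]
    (h : Function.Surjective (toPermHom G X)) (n : ℕ) : IsMultiplyPretransitive G X n where
  exists_smul_eq x y := by
    have := Equiv.Perm.isMultiplyPretransitive X n
    obtain ⟨σ, rfl⟩ := exists_smul_eq (Equiv.Perm X) x y
    obtain ⟨g, rfl⟩ := h σ
    exact ⟨g, rfl⟩

/-- The sign of a permutation as a complex linear character. -/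
noncomputable def signChar (α : Type*) [Fintype α] [DecidableEq α] : Equiv.Perm α →* ℂ :=
  ((Int.castRingHom ℂ : ℤ →* ℂ).comp (Units.coeHom ℤ)).comp sign

lemma signChar_apply {α : Type*} [Fintype α] [DecidableEq α] (g : Equiv.Perm α) :
    signChar α g = ((sign g : ℤ) : ℂ) :=
  rfl

lemma ker_signChar (α : Type*) [Fintype α] [DecidableEq α] :
    (signChar α).ker = alternatingGroup α := by
  ext g
  rw [MonoidHom.mem_ker, mem_alternatingGroup, signChar_apply, Int.cast_eq_one, Units.val_eq_one]

lemma charKer_signChar_tensor_deletedPermFDRep {α : Type} [Fintype α] [DecidableEq α]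
    (hα : 3 ≤ Fintype.card α) :
    charKer (linearCharFDRep (signChar α) ⊗ deletedPermFDRep ℂ (Equiv.Perm α) α) = ⊥ := by
  have : Nonempty α := Fintype.card_pos_iff.1 (by omega)
  refine charKer_eq_bot_of_character_ne fun g hg h ↦ hg ?_
  rw [← FDRep.char_one, character_linearCharFDRep_tensor, character_linearCharFDRep_tensor,
    character_deletedPermFDRep, character_deletedPermFDRep, signChar_apply, map_one, one_mul] at h
  have hone : Fintype.card (fixedBy α (1 : Equiv.Perm α)) = Fintype.card α := by simp
  rw [hone] at h
  have hscaled : (sign g : ℤ) * (Fintype.card (fixedBy α g) - 1) = Fintype.card α - 1 := mod_cast h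
  have hle : Fintype.card (fixedBy α g) ≤ Fintype.card α := Fintype.card_subtype_le _
  have hcard : Fintype.card (fixedBy α g) = Fintype.card α := by
    rcases Int.units_eq_one_or (sign g) with hsign | hsign <;>
      rw [hsign] at hscaled <;> push_cast at hscaled <;> omega
  have huniv := (set_fintype_card_eq_univ_iff _).1 hcard
  exact Equiv.ext fun x ↦ huniv.symm.subset (Set.mem_univ x)

lemma codeg_signChar_tensor_deletedPermFDRep {α : Type} [Fintype α] [DecidableEq α]
    (hα : 3 ≤ Fintype.card α) :
    codeg (linearCharFDRep (signChar α) ⊗ deletedPermFDRep ℂ (Equiv.Perm α) α) =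
      (Fintype.card α).factorial / (Fintype.card α - 1) := by
  have : Nonempty α := Fintype.card_pos_iff.1 (by omega)
  rw [codeg_of_charKer_eq_bot (charKer_signChar_tensor_deletedPermFDRep hα), Nat.card_perm,
    Nat.card_eq_fintype_card, finrank_linearCharFDRep_tensor]
  exact congrArg _ (finrank_deletedPermRep ℂ (Equiv.Perm α) α)

/-- The fixed-point-free involutions of `α`, which encode the partitions of `α` into pairs. -/
abbrev FixedPointFreeInvolution (α : Type*) : Type _ :=
  {σ : Equiv.Perm α // σ ^ 2 = 1 ∧ ∀ x, σ x ≠ x}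

/-- Permutations act on fixed-point-free involutions by conjugation. -/
instance {α : Type*} : MulAction (Equiv.Perm α) (FixedPointFreeInvolution α) where
  smul g σ := ⟨g * σ * g⁻¹, by rw [conj_pow, σ.2.1, mul_one, mul_inv_cancel], fun x hx ↦
    σ.2.2 (g⁻¹ x) <| by rwa [mul_apply, mul_apply, ← eq_inv_iff_eq] at hx⟩
  one_smul σ := Subtype.ext (show 1 * σ.1 * 1⁻¹ = σ.1 by group)
  mul_smul g h σ := Subtype.ext
    (show g * h * σ.1 * (g * h)⁻¹ = g * (h * σ.1 * h⁻¹) * g⁻¹ by group)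

lemma toPermHom_fixedPointFreeInvolution_fin_four_surjective :
    Function.Surjective (toPermHom (Equiv.Perm (Fin 4)) (FixedPointFreeInvolution (Fin 4))) := by
  unfold Function.Surjective
  decide +kernel

lemma card_fixedPointFreeInvolution_fin_four :
    Fintype.card (FixedPointFreeInvolution (Fin 4)) = 3 := by
  decide +kernel

instance : Nontrivial (FixedPointFreeInvolution (Fin 4)) :=
  Fintype.one_lt_card_iff_nontrivial.1 (by rw [card_fixedPointFreeInvolution_fin_four]; norm_num)

/-- The irreducible representations of `S₄`, of degrees `1, 1, 2, 3, 3`. -/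
noncomputable def irrepPermFinFour : Fin 5 → FDRep ℂ (Equiv.Perm (Fin 4)) :=
  ![linearCharFDRep 1, linearCharFDRep (signChar (Fin 4)),
    deletedPermFDRep ℂ _ (FixedPointFreeInvolution (Fin 4)), deletedPermFDRep ℂ _ (Fin 4),
    linearCharFDRep (signChar (Fin 4)) ⊗ deletedPermFDRep ℂ _ (Fin 4)]

instance simple_irrepPermFinFour (i : Fin 5) : Simple (irrepPermFinFour i) := by
  have := isMultiplyPretransitive_of_toPermHom_surjective
    toPermHom_fixedPointFreeInvolution_fin_four_surjective 2
  have := Equiv.Perm.isMultiplyPretransitive (Fin 4) 2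
  have : Simple (deletedPermFDRep ℂ (Equiv.Perm (Fin 4)) (Fin 4)) := simple_deletedPermFDRep
  fin_cases i
  exacts [simple_linearCharFDRep _, simple_linearCharFDRep _, simple_deletedPermFDRep, this,
    simple_linearCharFDRep_tensor _ _]

lemma sum_character_irrepPermFinFour (g : Equiv.Perm (Fin 4)) :
    ∑ i, (![1, 1, 2, 3, 3] i : ℂ) * (irrepPermFinFour i).character g =
      if g = 1 then (Nat.card (Equiv.Perm (Fin 4)) : ℂ) else 0 := by
  have hsum : ∀ g : Equiv.Perm (Fin 4),
      1 + (sign g : ℤ) + 2 * (Fintype.card (fixedBy (FixedPointFreeInvolution (Fin 4)) g) - 1) +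
        3 * (Fintype.card (fixedBy (Fin 4) g) - 1) +
        3 * ((sign g : ℤ) * (Fintype.card (fixedBy (Fin 4) g) - 1)) =
      if g = 1 then 24 else 0 := by
    decide +kernel
  have hcard : Nat.card (Equiv.Perm (Fin 4)) = 24 := by
    rw [Nat.card_perm, Nat.card_fin]
    rfl
  have hcomplex := congrArg (Int.cast : ℤ → ℂ) (hsum g)
  push_cast at hcomplex
  rw [hcard, Nat.cast_ofNat, ← hcomplex]
  simp [Fin.sum_univ_five, irrepPermFinFour, character_linearCharFDRep,
    character_linearCharFDRep_tensor, character_deletedPermFDRep, signChar_apply]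

lemma codeg_irrepPermFinFour (i : Fin 5) : codeg (irrepPermFinFour i) = ![1, 2, 3, 8, 8] i := by
  have htrivial : codeg (linearCharFDRep (1 : Equiv.Perm (Fin 4) →* ℂ)) = 1 := by
    rw [codeg_linearCharFDRep, MonoidHom.ker_one, Subgroup.index_top]
  have hsign : codeg (linearCharFDRep (signChar (Fin 4))) = 2 := by
    rw [codeg_linearCharFDRep, ker_signChar, alternatingGroup.index_eq_two]
  have hpairs : codeg (deletedPermFDRep ℂ (Equiv.Perm (Fin 4)) (FixedPointFreeInvolution (Fin 4))) =
      3 := by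
    rw [codeg_deletedPermFDRep_of_surjective
      toPermHom_fixedPointFreeInvolution_fin_four_surjective,
      card_fixedPointFreeInvolution_fin_four]
    rfl
  have hpoints : codeg (deletedPermFDRep ℂ (Equiv.Perm (Fin 4)) (Fin 4)) = 8 :=
    codeg_deletedPermFDRep_of_surjective fun σ ↦ ⟨σ, rfl⟩
  have htwisted : codeg (linearCharFDRep (signChar (Fin 4)) ⊗
      deletedPermFDRep ℂ (Equiv.Perm (Fin 4)) (Fin 4)) = 8 :=
    codeg_signChar_tensor_deletedPermFDRep (by simp)
  fin_cases i
  exacts [htrivial, hsign, hpairs, hpoints, htwisted]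

theorem codSet_perm_fin_four : codSet (Equiv.Perm (Fin 4)) = {1, 2, 3, 8} := by
  rw [codSet_eq_range sum_character_irrepPermFinFour, funext codeg_irrepPermFinFour]
  simp only [Matrix.range_cons, Matrix.range_empty, Set.union_empty, Set.singleton_union,
    Set.pair_eq_singleton]

end SymmetricGroup

theorem stmt_17 :
    fittingHeight (Equiv.Perm (Fin 4)) = 3 ∧
    (codSet (Equiv.Perm (Fin 4))).ncard = 4 ∧
    fittingHeight (Equiv.Perm (Fin 4)) = (codSet (Equiv.Perm (Fin 4))).ncard - 1 ∧
    2 * fittingHeight (Equiv.Perm (Fin 4)) = (codSet (Equiv.Perm (Fin 4))).ncard + 2 := by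
  have hcard : (codSet (Equiv.Perm (Fin 4))).ncard = 4 := by
    rw [codSet_perm_fin_four]
    exact Set.ncard_eq_toFinset_card' _
  rw [fittingHeight_perm_fin_four, hcard]
  norm_num
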